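/- arXiv:2605.01007 — 4 statements merged into one kernel-verified Lean document; each statement's English description precedes it below -/
import Mathlib

section
/- For every n ≥ 1, there is a bijection between the set of labeled planar binary trees with n leaves that avoid the three patterns x(*, x(*,*)), x(*, y(*,*)), y(*, y(*,*)) and the set of (unlabeled) planar binary trees with n internal vertices (equivalently, full binary trees with n + 1 leaves). -/
/-- Planar binary trees with internal vertices labeled by one of two symbols `x`, `y`. -/
inductive LTree : Type
  | leaf : LTree
  | x : LTree → LTree → LTree
  | y : LTree → LTree → LTree

namespace LTree

/-- Number of leaves. -/
def leaves : LTree → ℕ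
  | leaf => 1
  | x u v => u.leaves + v.leaves
  | y u v => u.leaves + v.leaves

/-- The subtree relation. -/
inductive Subtree : LTree → LTree → Prop
  | refl (t : LTree) : Subtree t t
  | xl {s u v : LTree} : Subtree s u → Subtree s (x u v)
  | xr {s u v : LTree} : Subtree s v → Subtree s (x u v)
  | yl {s u v : LTree} : Subtree s u → Subtree s (y u v)
  | yr {s u v : LTree} : Subtree s v → Subtree s (y u v)

/-- A tree matches (at the root) one of the three forbidden patterns
`x(*, x(*,*))`, `x(*, y(*,*))`, `y(*, y(*,*))`. -/
def IsBadZin : LTree → Prop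
  | x _ (x _ _) => True
  | x _ (y _ _) => True
  | y _ (y _ _) => True
  | _ => False

/-- A tree avoids the three patterns iff no subtree matches one of them. -/
def AvoidsZin (t : LTree) : Prop := ∀ s : LTree, Subtree s t → ¬ IsBadZin s

end LTree

/-- Unlabeled planar binary trees. -/
inductive PTree : Type
  | leaf : PTree
  | node : PTree → PTree → PTree

namespace PTree

/-- Number of internal vertices. -/
def internal : PTree → ℕ
  | leaf => 0
  | node u v => u.internal + v.internal + 1

end PTree

/-!
Apart from `leaf`, the avoiding trees are `x(u, leaf)`, `y(u, leaf)` and `y(u, x(v, leaf))` with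
`u`, `v` avoiding. Hence the class `A` of avoiding trees satisfies `A ≅ 1 + A + A + A × A ≅
(1 + A) × (1 + A)`, while planar binary trees satisfy `P ≅ 1 + P × P`. So `P ≅ 1 + A`, and this
isomorphism takes internal vertices to leaves because each of the four shapes contributes exactly
one leaf beyond those of `u` and `v`.
-/

namespace LTree

theorem avoidsZin_leaf : AvoidsZin leaf := by
  rintro s ⟨⟩
  exact id

theorem avoidsZin_x_iff_not_isBadZin {u v : LTree} :
    AvoidsZin (x u v) ↔ ¬ IsBadZin (x u v) ∧ AvoidsZin u ∧ AvoidsZin v := by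
  refine ⟨fun h => ⟨h _ (.refl _), fun s hs => h s (.xl hs), fun s hs => h s (.xr hs)⟩, ?_⟩
  rintro ⟨hroot, hu, hv⟩ s (_ | hs | hs)
  exacts [hroot, hu s hs, hv s hs]

theorem avoidsZin_y_iff_not_isBadZin {u v : LTree} :
    AvoidsZin (y u v) ↔ ¬ IsBadZin (y u v) ∧ AvoidsZin u ∧ AvoidsZin v := by
  refine ⟨fun h => ⟨h _ (.refl _), fun s hs => h s (.yl hs), fun s hs => h s (.yr hs)⟩, ?_⟩
  rintro ⟨hroot, hu, hv⟩ s (_ | _ | _ | hs | hs)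
  exacts [hroot, hu s hs, hv s hs]

theorem avoidsZin_x_iff {u v : LTree} : AvoidsZin (x u v) ↔ AvoidsZin u ∧ v = leaf := by
  rw [avoidsZin_x_iff_not_isBadZin]
  cases v <;> simp [IsBadZin, avoidsZin_leaf]

theorem avoidsZin_y_iff {u v : LTree} :
    AvoidsZin (y u v) ↔ AvoidsZin u ∧ (v = leaf ∨ ∃ w, AvoidsZin w ∧ v = x w leaf) := by
  rw [avoidsZin_y_iff_not_isBadZin]
  cases v <;> simp [IsBadZin, avoidsZin_leaf, avoidsZin_x_iff]

/-- The avoiding tree assembled from two optional avoiding trees, `none` standing for the empty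
tree. It plays the role for avoiding trees that `PTree.node` plays for planar binary trees. -/
def assemble : Option LTree → Option LTree → LTree
  | none, none => leaf
  | some u, none => x u leaf
  | none, some v => y v leaf
  | some u, some v => y u (x v leaf)

/-- The number of leaves of an optional tree, the empty tree `none` having no leaves. -/
def optionLeaves (o : Option LTree) : ℕ := o.elim 0 leaves

theorem leaves_assemble (o₁ o₂ : Option LTree) :
    (assemble o₁ o₂).leaves = optionLeaves o₁ + optionLeaves o₂ + 1 := by
  cases o₁ <;> cases o₂ <;> simp [assemble, leaves, optionLeaves, add_assoc]

theorem assemble_inj {o₁ o₂ o₁' o₂' : Option LTree} :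
    assemble o₁ o₂ = assemble o₁' o₂' ↔ o₁ = o₁' ∧ o₂ = o₂' := by
  cases o₁ <;> cases o₂ <;> cases o₁' <;> cases o₂' <;> simp [assemble]

theorem avoidsZin_assemble_iff {o₁ o₂ : Option LTree} :
    AvoidsZin (assemble o₁ o₂) ↔ (∀ u ∈ o₁, AvoidsZin u) ∧ ∀ v ∈ o₂, AvoidsZin v := by
  cases o₁ <;> cases o₂ <;>
    simp [assemble, avoidsZin_leaf, avoidsZin_x_iff, avoidsZin_y_iff]

theorem AvoidsZin.exists_eq_assemble {t : LTree} (ht : AvoidsZin t) :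
    ∃ o₁ o₂, t = assemble o₁ o₂ := by
  cases t with
  | leaf => exact ⟨none, none, rfl⟩
  | x u v =>
    obtain ⟨-, rfl⟩ := avoidsZin_x_iff.1 ht
    exact ⟨some u, none, rfl⟩
  | y u v =>
    obtain ⟨-, rfl | ⟨w, -, rfl⟩⟩ := avoidsZin_y_iff.1 ht
    exacts [⟨none, some u, rfl⟩, ⟨some u, some w, rfl⟩]

end LTree

namespace PTree

open LTree

/-- The optional labeled tree encoded by a planar binary tree, obtained by replacing each
`PTree.node` by `LTree.assemble`; only `PTree.leaf` encodes the empty tree `none`. -/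
def decode : PTree → Option LTree
  | leaf => none
  | node a b => some (assemble a.decode b.decode)

theorem optionLeaves_decode (b : PTree) : optionLeaves b.decode = b.internal := by
  induction b with
  | leaf => rfl
  | node a b iha ihb =>
    calc (assemble a.decode b.decode).leaves
        = optionLeaves a.decode + optionLeaves b.decode + 1 := leaves_assemble _ _
      _ = a.internal + b.internal + 1 := by rw [iha, ihb]

theorem decode_injective : Function.Injective decode := by
  intro p
  induction p with
  | leaf => rintro (_ | _) h <;> simp_all [decode]
  | node a b iha ihb =>
    rintro (_ | ⟨a', b'⟩) h
    · simp [decode] at h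
    · obtain ⟨ha, hb⟩ := assemble_inj.1 (Option.some.inj h)
      rw [iha ha, ihb hb]

theorem avoidsZin_of_mem_decode {b : PTree} : ∀ t ∈ b.decode, AvoidsZin t := by
  induction b with
  | leaf => simp [decode]
  | node a b iha ihb => simpa [decode] using avoidsZin_assemble_iff.2 ⟨iha, ihb⟩

theorem exists_decode_eq (o : Option LTree) (ho : ∀ t ∈ o, AvoidsZin t) :
    ∃ b : PTree, b.decode = o := by
  induction hn : optionLeaves o using Nat.strong_induction_on generalizing o with
  | _ n ih =>
    subst hn
    obtain _ | t := o
    · exact ⟨leaf, rfl⟩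
    have ht : AvoidsZin t := ho t rfl
    obtain ⟨o₁, o₂, rfl⟩ := ht.exists_eq_assemble
    obtain ⟨h₁, h₂⟩ := avoidsZin_assemble_iff.1 ht
    have hsize : optionLeaves (some (assemble o₁ o₂)) = optionLeaves o₁ + optionLeaves o₂ + 1 :=
      leaves_assemble o₁ o₂
    obtain ⟨a, rfl⟩ := ih _ (by lia) o₁ h₁ rfl
    obtain ⟨b, rfl⟩ := ih _ (by lia) o₂ h₂ rfl
    exact ⟨node a b, rfl⟩

theorem bijOn_decode {n : ℕ} (hn : 1 ≤ n) :
    Set.BijOn decode {b | b.internal = n} (some '' {t | t.leaves = n ∧ AvoidsZin t}) := by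
  refine ⟨?mapsTo, decode_injective.injOn, ?surjOn⟩
  case mapsTo =>
    intro b (hb : b.internal = n)
    obtain _ | ⟨a, c⟩ := b
    · exact absurd hb (Nat.ne_of_lt hn)
    · exact ⟨_, ⟨(optionLeaves_decode (node a c)).trans hb,
        avoidsZin_of_mem_decode (b := node a c) _ rfl⟩, rfl⟩
  case surjOn =>
    rintro _ ⟨t, ⟨hleaves, ht⟩, rfl⟩
    obtain ⟨b, hb⟩ := exists_decode_eq (some t) (by simpa using ht)
    refine ⟨b, ?_, hb⟩
    calc b.internal = optionLeaves (some t) := by rw [← optionLeaves_decode, hb]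
      _ = n := hleaves

end PTree

open LTree in
/-- For every `n ≥ 1` there is a bijection between labeled planar binary trees with
`n` leaves avoiding the three patterns `x(*, x(*,*))`, `x(*, y(*,*))`, `y(*, y(*,*))`
and unlabeled planar binary trees with `n` internal vertices. -/
theorem noncomZin_bijection_with_planar_binary_trees :
    ∀ n : ℕ, 1 ≤ n →
      Nonempty ({t : LTree // t.leaves = n ∧ AvoidsZin t} ≃
                {b : PTree // b.internal = n}) := by
  intro n hn
  let someEquiv := Equiv.Set.image some {t : LTree | t.leaves = n ∧ AvoidsZin t}
    (Option.some_injective LTree)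
  exact ⟨someEquiv.trans (PTree.bijOn_decode hn).equiv.symm⟩
end

section
/- Let X be the class of labeled planar binary trees all of whose internal vertices are labeled x, and Y the class of trees all of whose internal vertices are labeled y. Let C_x be the least class of trees containing every tree of the form y(v,w) and closed under c ↦ x(c, w) for arbitrary w, and C_y the least class containing every tree of the form x(v,w) and closed under c ↦ y(c, w). Then a labeled planar binary tree contains no subtree of the form x(u, c) with c ∈ C_x and no subtree of the form y(u, c) with c ∈ C_y if and only if it belongs to the least class N satisfying: leaf ∈ N, x(u, α) ∈ N for all u ∈ N and α ∈ X, and y(u, β) ∈ N for all u ∈ N and β ∈ Y. -/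
namespace LTree

/-- Trees all of whose internal vertices are labeled `x`. -/
inductive PureX : LTree → Prop
  | leaf : PureX leaf
  | node {u v : LTree} : PureX u → PureX v → PureX (x u v)

/-- Trees all of whose internal vertices are labeled `y`. -/
inductive PureY : LTree → Prop
  | leaf : PureY leaf
  | node {u v : LTree} : PureY u → PureY v → PureY (y u v)

/-- The least class `C_x` containing every tree `y(v,w)` and closed under
`c ↦ x(c, w)` for arbitrary `w`. -/
inductive Cx : LTree → Prop
  | base (v w : LTree) : Cx (y v w)
  | step {c : LTree} (w : LTree) : Cx c → Cx (x c w)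

/-- The least class `C_y` containing every tree `x(v,w)` and closed under
`c ↦ y(c, w)` for arbitrary `w`. -/
inductive Cy : LTree → Prop
  | base (v w : LTree) : Cy (x v w)
  | step {c : LTree} (w : LTree) : Cy c → Cy (y c w)

/-- A tree matches (at the root) a forbidden pattern of noncom-Bicom:
`x(u, c)` with `c ∈ C_x`, or `y(u, c)` with `c ∈ C_y`. -/
def IsBadBicom (s : LTree) : Prop :=
  (∃ u c, Cx c ∧ s = x u c) ∨ (∃ u c, Cy c ∧ s = y u c)

/-- A tree avoids all the forbidden patterns of noncom-Bicom. -/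
def AvoidsBicom (t : LTree) : Prop := ∀ s : LTree, Subtree s t → ¬ IsBadBicom s

/-- The least class `N`: `leaf ∈ N`; `x(u, α) ∈ N` for `u ∈ N`, `α` pure-`x`;
`y(u, β) ∈ N` for `u ∈ N`, `β` pure-`y`. -/
inductive NormalBicom : LTree → Prop
  | leaf : NormalBicom leaf
  | xn {u α : LTree} : NormalBicom u → PureX α → NormalBicom (x u α)
  | yn {u β : LTree} : NormalBicom u → PureY β → NormalBicom (y u β)

end LTree

/-!
`Cx t` says that the left spine of `t` consists of `x`s down to some `y`, so an avoiding tree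
outside `C_x` has a left spine labeled entirely by `x`. Avoidance keeps every right child along
that spine outside `C_x` as well, and by recursion the whole tree is labeled by `x`. Hence the
avoiding trees outside `C_x` are exactly the pure-`x` trees, and symmetrically for `y`. Therefore
the recursive description of avoidance, namely that `x(u, v)` avoids iff `u` and `v` avoid and
`v ∉ C_x`, is precisely the one defining `N`.
-/

namespace LTree

variable {s u v : LTree}

@[simp]
theorem subtree_leaf_iff : Subtree s leaf ↔ s = leaf :=
  ⟨fun h => by cases h; rfl, fun h => h ▸ .refl _⟩

@[simp]
theorem subtree_x_iff : Subtree s (x u v) ↔ s = x u v ∨ Subtree s u ∨ Subtree s v where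
  mp h := by
    cases h with
    | refl => exact .inl rfl
    | xl h => exact .inr (.inl h)
    | xr h => exact .inr (.inr h)
  mpr
    | .inl h => h ▸ .refl _
    | .inr (.inl h) => .xl h
    | .inr (.inr h) => .xr h

@[simp]
theorem subtree_y_iff : Subtree s (y u v) ↔ s = y u v ∨ Subtree s u ∨ Subtree s v where
  mp h := by
    cases h with
    | refl => exact .inl rfl
    | yl h => exact .inr (.inl h)
    | yr h => exact .inr (.inr h)
  mpr
    | .inl h => h ▸ .refl _
    | .inr (.inl h) => .yl h
    | .inr (.inr h) => .yr h

@[simp]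
theorem not_cx_leaf : ¬ Cx leaf := nofun

@[simp]
theorem cx_x_iff : Cx (x u v) ↔ Cx u :=
  ⟨fun | .step _ h => h, .step v⟩

@[simp]
theorem cx_y : Cx (y u v) := .base u v

@[simp]
theorem not_cy_leaf : ¬ Cy leaf := nofun

@[simp]
theorem cy_x : Cy (x u v) := .base u v

@[simp]
theorem cy_y_iff : Cy (y u v) ↔ Cy u :=
  ⟨fun | .step _ h => h, .step v⟩

@[simp]
theorem pureX_x_iff : PureX (x u v) ↔ PureX u ∧ PureX v :=
  ⟨fun | .node hu hv => ⟨hu, hv⟩, fun ⟨hu, hv⟩ => .node hu hv⟩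

@[simp]
theorem not_pureX_y : ¬ PureX (y u v) := nofun

@[simp]
theorem not_pureY_x : ¬ PureY (x u v) := nofun

@[simp]
theorem pureY_y_iff : PureY (y u v) ↔ PureY u ∧ PureY v :=
  ⟨fun | .node hu hv => ⟨hu, hv⟩, fun ⟨hu, hv⟩ => .node hu hv⟩

theorem normalBicom_x_iff : NormalBicom (x u v) ↔ NormalBicom u ∧ PureX v :=
  ⟨fun | .xn hu hv => ⟨hu, hv⟩, fun ⟨hu, hv⟩ => .xn hu hv⟩

theorem normalBicom_y_iff : NormalBicom (y u v) ↔ NormalBicom u ∧ PureY v :=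
  ⟨fun | .yn hu hv => ⟨hu, hv⟩, fun ⟨hu, hv⟩ => .yn hu hv⟩

@[simp]
theorem not_isBadBicom_leaf : ¬ IsBadBicom leaf := by
  simp [IsBadBicom]

@[simp]
theorem isBadBicom_x_iff : IsBadBicom (x u v) ↔ Cx v := by
  simp [IsBadBicom]

@[simp]
theorem isBadBicom_y_iff : IsBadBicom (y u v) ↔ Cy v := by
  simp [IsBadBicom]

theorem avoidsBicom_leaf : AvoidsBicom leaf := by
  simp [AvoidsBicom]

theorem avoidsBicom_x_iff :
    AvoidsBicom (x u v) ↔ AvoidsBicom u ∧ AvoidsBicom v ∧ ¬ Cx v := by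
  simp [AvoidsBicom, or_imp, forall_and, and_comm, and_assoc]

theorem avoidsBicom_y_iff :
    AvoidsBicom (y u v) ↔ AvoidsBicom u ∧ AvoidsBicom v ∧ ¬ Cy v := by
  simp [AvoidsBicom, or_imp, forall_and, and_comm, and_assoc]

theorem pureX_iff_avoidsBicom_and_not_cx (t : LTree) : PureX t ↔ AvoidsBicom t ∧ ¬ Cx t := by
  induction t with
  | leaf => simp [PureX.leaf, avoidsBicom_leaf]
  | x u v ihu ihv =>
    calc PureX (x u v)
      _ ↔ (AvoidsBicom u ∧ ¬ Cx u) ∧ AvoidsBicom v ∧ ¬ Cx v := by rw [pureX_x_iff, ihu, ihv]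
      _ ↔ (AvoidsBicom u ∧ AvoidsBicom v ∧ ¬ Cx v) ∧ ¬ Cx u := and_right_comm
      _ ↔ AvoidsBicom (x u v) ∧ ¬ Cx (x u v) := by rw [avoidsBicom_x_iff, cx_x_iff]
  | y u v => simp

theorem pureY_iff_avoidsBicom_and_not_cy (t : LTree) : PureY t ↔ AvoidsBicom t ∧ ¬ Cy t := by
  induction t with
  | leaf => simp [PureY.leaf, avoidsBicom_leaf]
  | x u v => simp
  | y u v ihu ihv =>
    calc PureY (y u v)
      _ ↔ (AvoidsBicom u ∧ ¬ Cy u) ∧ AvoidsBicom v ∧ ¬ Cy v := by rw [pureY_y_iff, ihu, ihv]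
      _ ↔ (AvoidsBicom u ∧ AvoidsBicom v ∧ ¬ Cy v) ∧ ¬ Cy u := and_right_comm
      _ ↔ AvoidsBicom (y u v) ∧ ¬ Cy (y u v) := by rw [avoidsBicom_y_iff, cy_y_iff]

end LTree

open LTree in
/-- A labeled planar binary tree contains no subtree of the form `x(u, c)` with
`c ∈ C_x` and no subtree of the form `y(u, c)` with `c ∈ C_y` iff it belongs to
the least class `N` of normal monomials of noncom-Bicom. -/
theorem noncomBicom_normal_forms :
    ∀ t : LTree, AvoidsBicom t ↔ NormalBicom t := by
  intro t
  induction t with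
  | leaf => exact iff_of_true avoidsBicom_leaf .leaf
  | x u v ihu =>
    rw [avoidsBicom_x_iff, ← pureX_iff_avoidsBicom_and_not_cx, ihu, normalBicom_x_iff]
  | y u v ihu =>
    rw [avoidsBicom_y_iff, ← pureY_iff_avoidsBicom_and_not_cy, ihu, normalBicom_y_iff]
end

section
/- For every n ≥ 1, there is a bijection between the set of trees with n leaves in the class N (the least class with leaf ∈ N, x(u, α) ∈ N for u ∈ N and α a pure-x tree, and y(u, β) ∈ N for u ∈ N and β a pure-y tree) and the set of words in the two-letter alphabet {E, N} containing exactly n − 1 letters E and exactly n − 1 letters N; equivalently, with the set of lattice paths from (0,0) to (n−1, n−1) with unit east and north steps. -/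
/-!
A word with as many `E`s as `N`s is a path returning to the diagonal. Cut it at its first return:
the path up to there is an excursion, strictly below the diagonal if its first letter `b` is `E`
and strictly above it if `b` is `N`, and the rest is again such a path. The excursion is
`b d b'` with `b'` the other letter and `d` a Dyck word with up-step `b`; Dyck words correspond to
planar binary trees by the same cut, so `d` is recorded as a pure tree labeled `b`. The last step
`b'` of the excursion marks where `d` ends, because no Dyck word followed by `b'` has a proper
prefix of the same form.
-/

namespace LTree

variable {b c : Bool} {s t u v : LTree} {w w' : List Bool}

/-- The internal vertex with a given label, where `true` (the letter `E`) stands for `x` and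
`false` (the letter `N`) for `y`, so that the two labels can be treated uniformly. -/
def node : Bool → LTree → LTree → LTree
  | true => x
  | false => y

/-- Trees all of whose internal vertices carry a given label, encoded as in `node`. -/
def IsPure : Bool → LTree → Prop
  | true => PureX
  | false => PureY

/-- The Dyck word, with up-step `b` and down-step `!b`, of the shape of a tree: the right subtree
of the root is the inside of the first arch and the left subtree is what follows it. The labels
of the vertices are ignored. -/
def dyckWord (b : Bool) : LTree → List Bool
  | leaf => []
  | x u v | y u v => b :: (dyckWord b v ++ (!b) :: dyckWord b u)

/-- The lattice path of a normal tree: the right subtree of the root gives the first excursion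
from the diagonal, on the side told by the label of the root, and the left subtree gives the rest
of the path. On other trees the labels inside right subtrees are ignored. -/
def pathWord : LTree → List Bool
  | leaf => []
  | x u v => true :: (dyckWord true v ++ false :: pathWord u)
  | y u v => false :: (dyckWord false v ++ true :: pathWord u)

theorem dyckWord_node :
    dyckWord b (node c u v) = b :: (dyckWord b v ++ (!b) :: dyckWord b u) := by
  cases c <;> rfl

theorem pathWord_node :
    pathWord (node b u v) = b :: (dyckWord b v ++ (!b) :: pathWord u) := by
  cases b <;> rfl

theorem leaves_node : (node b u v).leaves = u.leaves + v.leaves := by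
  cases b <;> rfl

@[elab_as_elim]
theorem node_induction {motive : LTree → Prop} (leaf : motive .leaf)
    (node : ∀ b u v, motive u → motive v → motive (LTree.node b u v)) (t : LTree) : motive t := by
  induction t with
  | leaf => exact leaf
  | x u v hu hv => exact node true u v hu hv
  | y u v hu hv => exact node false u v hu hv

theorem IsPure.leaf : IsPure b .leaf := by
  cases b
  exacts [PureY.leaf, PureX.leaf]

theorem IsPure.node (hu : IsPure b u) (hv : IsPure b v) : IsPure b (.node b u v) := by
  cases b
  exacts [PureY.node hu hv, PureX.node hu hv]

@[elab_as_elim]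
theorem IsPure.node_induction {motive : ∀ t, IsPure b t → Prop} (leaf : motive .leaf .leaf)
    (node : ∀ {u v} (hu : IsPure b u) (hv : IsPure b v),
      motive u hu → motive v hv → motive (.node b u v) (hu.node hv))
    (ht : IsPure b t) : motive t ht := by
  cases b
  · exact PureY.rec leaf node ht
  · exact PureX.rec leaf node ht

theorem NormalBicom.node (hu : NormalBicom u) (hv : IsPure b v) : NormalBicom (.node b u v) := by
  cases b
  exacts [.yn hu hv, .xn hu hv]

@[elab_as_elim]
theorem NormalBicom.node_induction {motive : ∀ t, NormalBicom t → Prop}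
    (leaf : motive .leaf .leaf)
    (node : ∀ {b u v} (hu : NormalBicom u) (hv : IsPure b v),
      motive u hu → motive (.node b u v) (hu.node hv))
    (ht : NormalBicom t) : motive t ht := by
  induction ht with
  | leaf => exact leaf
  | xn hu hv ih => exact node (b := true) hu hv ih
  | yn hu hv ih => exact node (b := false) hu hv ih

theorem count_cons_append_not_cons :
    (b :: (w ++ (!b) :: w')).count c = w.count c + w'.count c + 1 := by
  cases b <;> cases c <;> simp <;> omega

theorem count_dyckWord_add_one (b c : Bool) (t : LTree) :
    (dyckWord b t).count c + 1 = t.leaves := by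
  induction t using node_induction with
  | leaf => rfl
  | node d u v hu hv =>
    rw [dyckWord_node, leaves_node, count_cons_append_not_cons]
    omega

theorem count_pathWord_add_one (c : Bool) (t : LTree) : (pathWord t).count c + 1 = t.leaves := by
  induction t using node_induction with
  | leaf => rfl
  | node b u v hu _ =>
    have hv := count_dyckWord_add_one b c v
    rw [pathWord_node, leaves_node, count_cons_append_not_cons]
    omega

theorem count_dyckWord_append_not_cons (b : Bool) (t : LTree) (w : List Bool) :
    (dyckWord b t ++ (!b) :: w).count b + w.count (!b) + 1 =
      (dyckWord b t ++ (!b) :: w).count (!b) + w.count b := by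
  have hb := count_dyckWord_add_one b b t
  have hb' := count_dyckWord_add_one b (!b) t
  simp only [List.count_append, List.count_cons_self,
    List.count_cons_of_ne (Bool.not_ne_self b)]
  omega

theorem dyckWord_append_not_cons_inj (hs : IsPure b s) (ht : IsPure b t)
    (h : dyckWord b s ++ (!b) :: w = dyckWord b t ++ (!b) :: w') : s = t ∧ w = w' := by
  induction hs using IsPure.node_induction generalizing t w w' with
  | leaf =>
    cases ht using IsPure.node_induction with
    | leaf => simpa [dyckWord] using h
    | node => simp [dyckWord_node, dyckWord] at h
  | node _ _ ihu ihv =>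
    cases ht using IsPure.node_induction with
    | leaf => simp [dyckWord_node, dyckWord] at h
    | node hu' hv' =>
      simp only [dyckWord_node, List.cons_append, List.append_assoc, List.cons.injEq,
        true_and] at h
      obtain ⟨rfl, hrest⟩ := ihv hv' h
      obtain ⟨rfl, rfl⟩ := ihu hu' hrest
      exact ⟨rfl, rfl⟩

theorem pathWord_injOn : Set.InjOn pathWord {t | NormalBicom t} := by
  intro s hs t ht h
  induction hs using NormalBicom.node_induction generalizing t with
  | leaf =>
    cases ht using NormalBicom.node_induction with
    | leaf => rfl
    | node => simp [pathWord_node, pathWord] at h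
  | node _ hv ih =>
    cases ht using NormalBicom.node_induction with
    | leaf => simp [pathWord_node, pathWord] at h
    | node hu' hv' =>
      rw [pathWord_node, pathWord_node, List.cons.injEq] at h
      obtain ⟨rfl, htail⟩ := h
      obtain ⟨rfl, hrest⟩ := dyckWord_append_not_cons_inj hv hv' htail
      rw [ih hu' hrest]

theorem exists_dyckWord_append_not_cons_eq (b : Bool) (w : List Bool)
    (hw : w.count b < w.count (!b)) :
    ∃ t w', IsPure b t ∧ dyckWord b t ++ (!b) :: w' = w := by
  match w with
  | [] => simp at hw
  | c :: w =>
    obtain rfl | rfl := Bool.eq_or_eq_not c b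
    · rw [List.count_cons_self, List.count_cons_of_ne (Bool.self_ne_not c)] at hw
      obtain ⟨v, w₁, hv, rfl⟩ := exists_dyckWord_append_not_cons_eq c w (by omega)
      have hw₁ : w₁.count c < w₁.count (!c) := by
        have hcount := count_dyckWord_append_not_cons c v w₁
        omega
      obtain ⟨u, w₂, hu, rfl⟩ := exists_dyckWord_append_not_cons_eq c w₁ hw₁
      exact ⟨node c u v, w₂, hu.node hv, by simp [dyckWord_node]⟩
    · exact ⟨leaf, w, .leaf, rfl⟩
termination_by w.length

theorem exists_normalBicom_pathWord_eq (w : List Bool) (hw : w.count true = w.count false) :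
    ∃ t, NormalBicom t ∧ pathWord t = w := by
  match w with
  | [] => exact ⟨leaf, .leaf, rfl⟩
  | b :: w =>
    have hexcess : w.count b + 1 = w.count (!b) := by cases b <;> simp_all
    obtain ⟨v, w₁, hv, rfl⟩ := exists_dyckWord_append_not_cons_eq b w (by omega)
    have hcount := count_dyckWord_append_not_cons b v w₁
    have hw₁ : w₁.count true = w₁.count false := by cases b <;> grind
    obtain ⟨u, hu, rfl⟩ := exists_normalBicom_pathWord_eq w₁ hw₁
    exact ⟨node b u v, hu.node hv, pathWord_node⟩
termination_by w.length

theorem bijOn_pathWord :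
    Set.BijOn pathWord {t | NormalBicom t} {w | w.count true = w.count false} := by
  refine ⟨fun t _ ↦ ?_, pathWord_injOn, fun w hw ↦ exists_normalBicom_pathWord_eq w hw⟩
  exact Nat.add_right_cancel <|
    (count_pathWord_add_one true t).trans (count_pathWord_add_one false t).symm

end LTree

open LTree in
/-- For every `n ≥ 1` there is a bijection between the trees with `n` leaves in the
class `N` of normal monomials of noncom-Bicom and the words in the alphabet `{E, N}`
(modeled as lists over `Bool`) containing exactly `n - 1` letters `E` and exactly
`n - 1` letters `N`, i.e. lattice paths from `(0,0)` to `(n-1, n-1)`. -/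
theorem noncomBicom_bijection_with_lattice_paths :
    ∀ n : ℕ, 1 ≤ n →
      Nonempty ({t : LTree // t.leaves = n ∧ NormalBicom t} ≃
                {w : List Bool // w.count true = n - 1 ∧ w.count false = n - 1}) := by
  intro n hn
  let paths : Set (List Bool) := {w | w.count true = n - 1 ∧ w.count false = n - 1}
  have hpaths : paths ⊆ {w | w.count true = w.count false} := fun w hw ↦ hw.1.trans hw.2.symm
  have htrees : {t | NormalBicom t} ∩ pathWord ⁻¹' paths =
      {t | t.leaves = n ∧ NormalBicom t} := by
    ext t
    have htrue := count_pathWord_add_one true t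
    have hfalse := count_pathWord_add_one false t
    simp only [Set.mem_inter_iff, Set.mem_preimage, Set.mem_ofPred_eq, paths]
    grind
  exact ⟨(htrees ▸ bijOn_pathWord.subset_right hpaths).equiv _⟩
end

section
/- For every n ≥ 1, the number of trees with n leaves in the class N (the least class with leaf ∈ N, x(u, α) ∈ N for u ∈ N and α a pure-x tree, and y(u, β) ∈ N for u ∈ N and β a pure-y tree) equals the central binomial coefficient binom(2n − 2, n − 1) = (2n − 2)!/((n − 1)!·(n − 1)!). (This number is the dimension of the n-th component of the operad noncom-Bicom.) -/
/-!
Count trees by leaves with a generating series: grafting two classes of trees multiplies their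
series. The pure classes therefore both have the series `g` with `g = X + g²`, which is `X` times
the Catalan series, and the series `h` of `N` satisfies `h = X + 2hg`. Differentiating the first
equation gives `g' = 1 + 2gg'`, so `X g'` solves the second one, and `h = X g'`. Its coefficient at
`X ^ n` is `n * catalan (n - 1)`, a central binomial coefficient.
-/

section PowerSeries

open PowerSeries

variable {R : Type*} [CommRing R]

theorem isUnit_one_sub_of_constantCoeff_eq_zero {f : R⟦X⟧} (hf : constantCoeff f = 0) :
    IsUnit (1 - f) := by
  simp [isUnit_iff_constantCoeff, hf]

theorem eq_of_eq_add_sq {a f g : R⟦X⟧} (hf₀ : constantCoeff f = 0) (hg₀ : constantCoeff g = 0)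
    (hf : f = a + f ^ 2) (hg : g = a + g ^ 2) : f = g := by
  have hu : IsUnit (1 - (f + g)) := isUnit_one_sub_of_constantCoeff_eq_zero (by simp [hf₀, hg₀])
  rw [← sub_eq_zero, ← hu.mul_left_eq_zero]
  linear_combination hf - hg

theorem eq_X_mul_catalanSeries {g : R⟦X⟧} (hg₀ : constantCoeff g = 0) (hg : g = X + g ^ 2) :
    g = X * catalanSeries.map (Nat.castRingHom R) := by
  refine eq_of_eq_add_sq hg₀ (by simp) hg ?_
  have hC := congrArg (PowerSeries.map (Nat.castRingHom R)) catalanSeries_sq_mul_X_add_one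
  simp only [map_add, map_mul, map_pow, map_one, map_X] at hC
  linear_combination -X * hC

theorem eq_X_mul_derivative {g h : R⟦X⟧} (hg₀ : constantCoeff g = 0) (hg : g = X + g ^ 2)
    (hh : h = X + 2 * h * g) : h = X * d⁄dX R g := by
  have hg' : d⁄dX R g = 1 + 2 * g * d⁄dX R g := by
    conv_lhs => rw [hg]
    simp [mul_assoc]
  have hu : IsUnit (1 - 2 * g) := isUnit_one_sub_of_constantCoeff_eq_zero (by simp [hg₀])
  rw [← sub_eq_zero, ← hu.mul_left_eq_zero]
  linear_combination hh - X * hg'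

theorem coeff_X_mul_derivative_X_mul_catalanSeries (m : ℕ) :
    coeff (m + 1) (X * d⁄dX R (X * catalanSeries.map (Nat.castRingHom R))) =
      (m.centralBinom : R) := by
  rw [coeff_succ_X_mul, coeff_derivative, coeff_succ_X_mul, coeff_map, catalanSeries_coeff,
    ← succ_mul_catalan_eq_centralBinom]
  push_cast
  ring

end PowerSeries

namespace LTree

open PowerSeries
open Finset.HasAntidiagonal (antidiagonal mem_antidiagonal)

theorem leaves_pos (t : LTree) : 0 < t.leaves := by
  induction t <;> simp only [leaves] <;> omega

theorem finite_setOf_leaves_le (n : ℕ) : {t : LTree | t.leaves ≤ n}.Finite := by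
  induction n with
  | zero => simp [(leaves_pos _).ne']
  | succ n ih =>
    refine (((Set.finite_singleton leaf).union (ih.image2 x ih)).union (ih.image2 y ih)).subset ?_
    rintro (_ | ⟨u, v⟩ | ⟨u, v⟩) h
    · simp
    all_goals
      have hu := leaves_pos u
      have hv := leaves_pos v
      simp only [Set.mem_ofPred_eq, leaves] at h
      have hun : u.leaves ≤ n := by omega
      have hvn : v.leaves ≤ n := by omega
      simp [hun, hvn]

theorem finite_sep_leaves_eq (s : Set LTree) (n : ℕ) : {t ∈ s | t.leaves = n}.Finite :=
  (finite_setOf_leaves_le n).subset fun _ ht => ht.2.le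

/-- The finite set of trees with `n` leaves in the class `s`. -/
noncomputable def level (s : Set LTree) (n : ℕ) : Finset LTree :=
  (finite_sep_leaves_eq s n).toFinset

@[simp]
theorem mem_level {s : Set LTree} {n : ℕ} {t : LTree} : t ∈ level s n ↔ t ∈ s ∧ t.leaves = n := by
  simp [level]

/-- The generating series counting the trees of a class by their number of leaves. Coefficients
are integers, rather than natural numbers, so that equations between series can be solved. -/
noncomputable def leafSeries (s : Set LTree) : ℤ⟦X⟧ :=
  PowerSeries.mk fun n => ((level s n).card : ℤ)

@[simp]
theorem coeff_leafSeries (s : Set LTree) (n : ℕ) : coeff n (leafSeries s) = (level s n).card :=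
  coeff_mk _ _

theorem constantCoeff_leafSeries (s : Set LTree) : constantCoeff (leafSeries s) = 0 := by
  have h : level s 0 = ∅ := by ext t; simp [(leaves_pos t).ne']
  rw [← coeff_zero_eq_constantCoeff_apply, coeff_leafSeries, h, Finset.card_empty, Nat.cast_zero]

theorem leafSeries_singleton_leaf : leafSeries {leaf} = X := by
  ext n
  rw [coeff_leafSeries, coeff_X]
  split_ifs with h
  · have hlevel : level {leaf} n = {leaf} := by ext t; simp +contextual [h, leaves]
    simp [hlevel]
  · have hlevel : level {leaf} n = ∅ := by ext t; simp +contextual [Ne.symm h, leaves]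
    simp [hlevel]

theorem leafSeries_union {s t : Set LTree} (hst : Disjoint s t) :
    leafSeries (s ∪ t) = leafSeries s + leafSeries t := by
  classical
  ext n
  have hunion : level (s ∪ t) n = level s n ∪ level t n := by ext; simp [or_and_right]
  have hdisj : Disjoint (level s n) (level t n) := Finset.disjoint_left.2 fun w hs ht =>
    hst.notMem_of_mem_left (mem_level.1 hs).1 (mem_level.1 ht).1
  simp [hunion, Finset.card_union_of_disjoint hdisj]

/-- A graft is a binary operation on trees that, like `x` and `y`, remembers its two arguments and
adds their numbers of leaves. -/
structure IsGraft (f : LTree → LTree → LTree) : Prop where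
  injective2 : Function.Injective2 f
  leaves_apply (u v : LTree) : (f u v).leaves = u.leaves + v.leaves

theorem isGraft_x : IsGraft x := ⟨fun _ _ _ _ h => by simpa using h, fun _ _ => rfl⟩

theorem isGraft_y : IsGraft y := ⟨fun _ _ _ _ h => by simpa using h, fun _ _ => rfl⟩

namespace IsGraft

variable {f : LTree → LTree → LTree}

theorem disjoint_singleton_leaf (hf : IsGraft f) (s t : Set LTree) :
    Disjoint {leaf} (Set.image2 f s t) := by
  rw [Set.disjoint_singleton_left]
  rintro ⟨u, -, v, -, h⟩
  have hleaves : u.leaves + v.leaves = 1 := by rw [← hf.leaves_apply, h, leaves]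
  have hu := u.leaves_pos
  have hv := v.leaves_pos
  omega

theorem card_level_image2 (hf : IsGraft f) (s t : Set LTree) (n : ℕ) :
    (level (Set.image2 f s t) n).card =
      ∑ ij ∈ antidiagonal n, (level s ij.1).card * (level t ij.2).card := by
  simp_rw [← Finset.card_product]
  rw [← Finset.card_sigma]
  symm
  refine Finset.card_bij (fun p _ => f p.2.1 p.2.2) ?_ ?_ ?_
  · rintro ⟨⟨i, j⟩, u, v⟩ h
    simp only [Finset.mem_sigma, mem_antidiagonal, Finset.mem_product, mem_level] at h
    obtain ⟨hij, ⟨hu, rfl⟩, hv, rfl⟩ := h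
    exact mem_level.2 ⟨Set.mem_image2_of_mem hu hv, by rw [hf.leaves_apply, hij]⟩
  · rintro ⟨⟨i, j⟩, u, v⟩ h ⟨⟨i', j'⟩, u', v'⟩ h' heq
    simp only [Finset.mem_sigma, Finset.mem_product, mem_level] at h h'
    obtain ⟨-, ⟨-, rfl⟩, -, rfl⟩ := h
    obtain ⟨-, ⟨-, rfl⟩, -, rfl⟩ := h'
    obtain ⟨rfl, rfl⟩ := hf.injective2 heq
    rfl
  · intro w hw
    obtain ⟨⟨u, hu, v, hv, rfl⟩, hn⟩ := mem_level.1 hw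
    exact ⟨⟨(u.leaves, v.leaves), u, v⟩, by simp [hu, hv, ← hn, hf.leaves_apply], rfl⟩

theorem leafSeries_image2 (hf : IsGraft f) (s t : Set LTree) :
    leafSeries (Set.image2 f s t) = leafSeries s * leafSeries t := by
  ext n
  simp [coeff_mul, hf.card_level_image2]

theorem leafSeries_eq_X_add_sq (hf : IsGraft f) {s : Set LTree}
    (hs : s = {leaf} ∪ Set.image2 f s s) : leafSeries s = X + leafSeries s ^ 2 := by
  conv_lhs => rw [hs]
  rw [leafSeries_union (hf.disjoint_singleton_leaf s s), leafSeries_singleton_leaf,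
    hf.leafSeries_image2, sq]

end IsGraft

theorem setOf_pureX_eq_union :
    {t | PureX t} = {leaf} ∪ Set.image2 x {t | PureX t} {t | PureX t} := by
  ext t
  constructor
  · rintro (_ | ⟨hu, hv⟩)
    · exact .inl rfl
    · exact .inr ⟨_, hu, _, hv, rfl⟩
  · rintro (rfl | ⟨u, hu, v, hv, rfl⟩)
    · exact .leaf
    · exact .node hu hv

theorem setOf_pureY_eq_union :
    {t | PureY t} = {leaf} ∪ Set.image2 y {t | PureY t} {t | PureY t} := by
  ext t
  constructor
  · rintro (_ | ⟨hu, hv⟩)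
    · exact .inl rfl
    · exact .inr ⟨_, hu, _, hv, rfl⟩
  · rintro (rfl | ⟨u, hu, v, hv, rfl⟩)
    · exact .leaf
    · exact .node hu hv

theorem setOf_normalBicom_eq_union :
    {t | NormalBicom t} = {leaf} ∪ Set.image2 x {t | NormalBicom t} {t | PureX t} ∪
      Set.image2 y {t | NormalBicom t} {t | PureY t} := by
  ext t
  constructor
  · rintro (_ | ⟨hu, hα⟩ | ⟨hu, hβ⟩)
    · exact .inl (.inl rfl)
    · exact .inl (.inr ⟨_, hu, _, hα, rfl⟩)
    · exact .inr ⟨_, hu, _, hβ, rfl⟩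
  · rintro ((rfl | ⟨u, hu, α, hα, rfl⟩) | ⟨u, hu, β, hβ, rfl⟩)
    · exact .leaf
    · exact .xn hu hα
    · exact .yn hu hβ

theorem disjoint_image2_x_image2_y (s t s' t' : Set LTree) :
    Disjoint (Set.image2 x s t) (Set.image2 y s' t') := by
  rw [Set.disjoint_left]
  rintro _ ⟨u, -, v, -, rfl⟩ ⟨u', -, v', -, h⟩
  cases h

theorem leafSeries_pureX_eq_X_add_sq :
    leafSeries {t | PureX t} = X + leafSeries {t | PureX t} ^ 2 :=
  isGraft_x.leafSeries_eq_X_add_sq setOf_pureX_eq_union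

theorem leafSeries_pureY_eq_pureX : leafSeries {t | PureY t} = leafSeries {t | PureX t} :=
  eq_of_eq_add_sq (constantCoeff_leafSeries _) (constantCoeff_leafSeries _)
    (isGraft_y.leafSeries_eq_X_add_sq setOf_pureY_eq_union) leafSeries_pureX_eq_X_add_sq

theorem leafSeries_normalBicom_eq_X_add :
    leafSeries {t | NormalBicom t} =
      X + 2 * leafSeries {t | NormalBicom t} * leafSeries {t | PureX t} := by
  conv_lhs => rw [setOf_normalBicom_eq_union]
  rw [leafSeries_union ((isGraft_y.disjoint_singleton_leaf _ _).union_left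
      (disjoint_image2_x_image2_y _ _ _ _)),
    leafSeries_union (isGraft_x.disjoint_singleton_leaf _ _), leafSeries_singleton_leaf,
    isGraft_x.leafSeries_image2, isGraft_y.leafSeries_image2, leafSeries_pureY_eq_pureX]
  ring

theorem leafSeries_normalBicom :
    leafSeries {t | NormalBicom t} =
      X * d⁄dX ℤ (X * catalanSeries.map (Nat.castRingHom ℤ)) := by
  have hg₀ := constantCoeff_leafSeries {t | PureX t}
  have hg := leafSeries_pureX_eq_X_add_sq
  rw [eq_X_mul_derivative hg₀ hg leafSeries_normalBicom_eq_X_add, eq_X_mul_catalanSeries hg₀ hg]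

theorem card_level_normalBicom_succ (m : ℕ) :
    (level {t | NormalBicom t} (m + 1)).card = m.centralBinom := by
  have h : coeff (m + 1) (leafSeries {t | NormalBicom t}) = m.centralBinom := by
    rw [leafSeries_normalBicom, coeff_X_mul_derivative_X_mul_catalanSeries]
  exact_mod_cast (coeff_leafSeries _ _).symm.trans h

end LTree

open LTree in
/-- For every `n ≥ 1`, the number of trees with `n` leaves in the class `N` of normal
monomials of noncom-Bicom (i.e. `dim (noncom-Bicom)(n)`) equals the central binomial
coefficient `C(2n - 2, n - 1) = (2n-2)! / ((n-1)! (n-1)!)`. -/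
theorem noncomBicom_dim_eq_centralBinom :
    ∀ n : ℕ, 1 ≤ n →
      Nat.card {t : LTree // t.leaves = n ∧ NormalBicom t} = (2 * n - 2).choose (n - 1) := by
  intro n hn
  obtain ⟨m, rfl⟩ := Nat.exists_eq_add_of_le' hn
  calc Nat.card {t : LTree // t.leaves = m + 1 ∧ NormalBicom t}
      = (level {t | NormalBicom t} (m + 1)).card :=
        Nat.subtype_card _ fun t => mem_level.trans and_comm
    _ = m.centralBinom := card_level_normalBicom_succ m
    _ = (2 * (m + 1) - 2).choose (m + 1 - 1) := m.centralBinom_eq_two_mul_choose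
end
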